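/- Let V be a 3-dimensional subspace of ℝ⁶ on which the form (·,·) is nondegenerate and indefinite, let V^⊥ be its orthogonal complement, and set S = {x ∈ ℝ⁴ : s_x ∈ V^⊥} and S^⊥ = {x ∈ ℝ⁴ : s_x ∈ V}. If a, a', a'' ∈ S are pairwise non-null-separated (‖a−a'‖² ≠ 0, ‖a'−a''‖² ≠ 0, ‖a−a''‖² ≠ 0), then S^⊥ = {x ∈ ℝ⁴ : ‖x−a‖² = 0 and ‖x−a'‖² = 0 and ‖x−a''‖² = 0}, i.e. S^⊥ is the intersection of the three isotropic cones centered at a, a', a''. -/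

import Mathlib

/-!
The polyspherical coordinates satisfy `(s_x, s_y) = -‖x - y‖² / 2`. Hence the Gram matrix of
`s_a, s_a', s_a''` has zero diagonal and nonzero off-diagonal entries `p, q, r`, so its
determinant `2pqr` is nonzero. The pairing map `s ↦ ((s, s_a), (s, s_a'), (s, s_a''))` is therefore
onto `ℝ³`, with kernel of dimension `3`. This kernel contains `V`, so it equals `V` by dimension
count: `s_x ∈ V` exactly when `s_x` is orthogonal to the three vectors, i.e. when
`x` is null-separated from the three points.
-/

noncomputable section

/-- The neutral bilinear form of signature (2,2) on ℝ⁴. -/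
def form22 (x y : Fin 4 → ℝ) : ℝ := x 0 * y 0 + x 1 * y 1 - x 2 * y 2 - x 3 * y 3

/-- The associated neutral quadratic form `‖x‖² = x₁² + x₂² − x₃² − x₄²`. -/
def q22 (x : Fin 4 → ℝ) : ℝ := form22 x x

/-- The neutral bilinear form of signature (3,3) on ℝ⁶. -/
def form33 (s t : Fin 6 → ℝ) : ℝ :=
  s 0 * t 0 + s 1 * t 1 + s 2 * t 2 - s 3 * t 3 - s 4 * t 4 - s 5 * t 5

/-- Diagonal polyspherical coordinates of the isotropic cone centered at `x`. -/
def sx (x : Fin 4 → ℝ) : Fin 6 → ℝ :=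
  ![(1 - q22 x) / 2, x 0, x 1, x 2, x 3, (1 + q22 x) / 2]

/-- The (·,·)-orthogonal complement of a subspace of ℝ⁶. -/
def perp33 (V : Submodule ℝ (Fin 6 → ℝ)) : Submodule ℝ (Fin 6 → ℝ) where
  carrier := {s | ∀ v ∈ V, form33 s v = 0}
  zero_mem' := by intro v hv; simp [form33]
  add_mem' := by
    intro a b ha hb v hv
    have h1 := ha v hv
    have h2 := hb v hv
    simp only [form33, Pi.add_apply] at *
    linarith [h1, h2, mul_comm (a 0) (v 0)]
  smul_mem' := by
    intro c a ha v hv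
    have h := ha v hv
    simp only [form33, Pi.smul_apply, smul_eq_mul] at *
    linear_combination c * h

/-- The restriction of the (3,3)-form to `W` is nondegenerate. -/
def NondegenerateOn (W : Submodule ℝ (Fin 6 → ℝ)) : Prop :=
  ∀ w ∈ W, (∀ w' ∈ W, form33 w w' = 0) → w = 0

/-- The restriction of the (3,3)-form to `W` is nondegenerate and indefinite. -/
def IndefiniteOn (W : Submodule ℝ (Fin 6 → ℝ)) : Prop :=
  NondegenerateOn W ∧ (∃ w ∈ W, 0 < form33 w w) ∧ (∃ w ∈ W, form33 w w < 0)

lemma form33_sx (x y : Fin 4 → ℝ) : form33 (sx x) (sx y) = -q22 (x - y) / 2 := by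
  simp [form33, sx, q22, form22]
  ring

lemma form33_comm (s t : Fin 6 → ℝ) : form33 s t = form33 t s := by
  simp only [form33]
  ring

/-- Pairing with three vectors of `ℝ⁶`, as a linear map to `ℝ³`. -/
def pairing (u v w : Fin 6 → ℝ) : (Fin 6 → ℝ) →ₗ[ℝ] (Fin 3 → ℝ) where
  toFun s := ![form33 s u, form33 s v, form33 s w]
  map_add' s t := by
    ext i
    fin_cases i <;> simp [form33] <;> ring
  map_smul' c s := by
    ext i
    fin_cases i <;> simp [form33] <;> ring

lemma mem_ker_pairing (u v w s : Fin 6 → ℝ) :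
    s ∈ LinearMap.ker (pairing u v w) ↔
      form33 s u = 0 ∧ form33 s v = 0 ∧ form33 s w = 0 := by
  simp [pairing]

/-- Three isotropic vectors that are pairwise non-orthogonal have an invertible Gram matrix, so
already their span is mapped onto `ℝ³`. -/
lemma pairing_surjective {u v w : Fin 6 → ℝ}
    (hu : form33 u u = 0) (hv : form33 v v = 0) (hw : form33 w w = 0)
    (huv : form33 u v ≠ 0) (hvw : form33 v w ≠ 0) (huw : form33 u w ≠ 0) :
    Function.Surjective (pairing u v w) := by
  intro y
  have hvu := form33_comm v u
  have hwv := form33_comm w v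
  have hwu := form33_comm w u
  have key : ∀ c₁ c₂ c₃ : ℝ, pairing u v w (c₁ • u + c₂ • v + c₃ • w) =
      ![c₂ * form33 u v + c₃ * form33 u w, c₁ * form33 u v + c₃ * form33 v w,
        c₁ * form33 u w + c₂ * form33 v w] := by
    intro c₁ c₂ c₃
    simp only [map_add, map_smul]
    ext i
    fin_cases i <;> simp [pairing, hu, hv, hw, hvu, hwv, hwu]
  generalize form33 u v = p at *
  generalize form33 v w = q at *
  generalize form33 u w = r at *
  -- The coefficients solve the 3 × 3 Gram system, by Cramer's rule.
  refine ⟨((y 1 * r + y 2 * p - y 0 * q) / (2 * p * r)) • u +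
    ((y 0 * q + y 2 * p - y 1 * r) / (2 * p * q)) • v +
    ((y 0 * q + y 1 * r - y 2 * p) / (2 * q * r)) • w, ?_⟩
  rw [key]
  ext i
  fin_cases i <;> simp <;> field_simp <;> ring

theorem conjugate_conic_is_intersection_of_three_cones (V : Submodule ℝ (Fin 6 → ℝ))
    (hdim : Module.finrank ℝ V = 3) (hind : IndefiniteOn V)
    (a a' a'' : Fin 4 → ℝ)
    (ha : a ∈ {x : Fin 4 → ℝ | sx x ∈ perp33 V})
    (ha' : a' ∈ {x : Fin 4 → ℝ | sx x ∈ perp33 V})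
    (ha'' : a'' ∈ {x : Fin 4 → ℝ | sx x ∈ perp33 V})
    (h1 : q22 (a - a') ≠ 0) (h2 : q22 (a' - a'') ≠ 0) (h3 : q22 (a - a'') ≠ 0) :
    {x : Fin 4 → ℝ | sx x ∈ V} =
      {x : Fin 4 → ℝ | q22 (x - a) = 0 ∧ q22 (x - a') = 0 ∧ q22 (x - a'') = 0} := by
  simp only [Set.mem_ofPred_eq] at ha ha' ha''
  have hself : ∀ x, form33 (sx x) (sx x) = 0 := by
    intro x
    rw [form33_sx]
    simp [q22, form22]
  have hne : ∀ x y, q22 (x - y) ≠ 0 → form33 (sx x) (sx y) ≠ 0 := by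
    intro x y h
    rw [form33_sx]
    simpa using h
  have hsurj := pairing_surjective (hself a) (hself a') (hself a'')
    (hne _ _ h1) (hne _ _ h2) (hne _ _ h3)
  have hker : Module.finrank ℝ (LinearMap.ker (pairing (sx a) (sx a') (sx a''))) = 3 := by
    have h := LinearMap.finrank_range_add_finrank_ker (pairing (sx a) (sx a') (sx a''))
    rw [LinearMap.range_eq_top.mpr hsurj, finrank_top] at h
    simp only [Module.finrank_fin_fun] at h
    omega
  have hle : V ≤ LinearMap.ker (pairing (sx a) (sx a') (sx a'')) := by
    intro s hs
    rw [mem_ker_pairing, form33_comm s, form33_comm s, form33_comm s]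
    exact ⟨ha s hs, ha' s hs, ha'' s hs⟩
  have hV := Submodule.eq_of_le_of_finrank_eq hle (hdim.trans hker.symm)
  ext x
  rw [Set.mem_ofPred_eq, Set.mem_ofPred_eq, hV, mem_ker_pairing]
  simp [form33_sx]
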